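/- Let T(P, L0, x) = (G', S', L') be a democratic reduction of a path P in a canvas T = (G, S, L) with respect to a two-element color set L0 and centered at x. If φ is an L'-coloring of G', then φ can be extended to an L-coloring of G. -/

import Mathlib

/-!
Common definitions: plane graphs (given by a concrete embedding in the plane),
outer face, canvases, list colorings, governments, harmonicas and coloring
harmonicas, following Postle–Thomas,
"Five-list-coloring graphs on surfaces III".
-/

open Set

universe u

/-- A finite simple graph together with an embedding in the plane:
each vertex gets a point, each edge a simple arc joining its endpoints;
arcs avoid other vertices, and two distinct edges meet only in common
endpoints. -/
structure PlaneGraph (V : Type u) where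
  verts : Set V
  Adj : V → V → Prop
  finite_verts : verts.Finite
  adj_symm : ∀ u v, Adj u v → Adj v u
  adj_irrefl : ∀ v, ¬Adj v v
  adj_mem : ∀ u v, Adj u v → u ∈ verts
  pos : V → ℝ × ℝ
  arc : Sym2 V → Set (ℝ × ℝ)
  pos_injOn : Set.InjOn pos verts
  arc_arc : ∀ u v, Adj u v → ∃ f : ℝ → ℝ × ℝ,
    ContinuousOn f (Set.Icc 0 1) ∧ Set.InjOn f (Set.Icc 0 1) ∧
    f '' Set.Icc 0 1 = arc s(u, v) ∧ f 0 = pos u ∧ f 1 = pos v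
  arc_avoid : ∀ u v, Adj u v → ∀ w ∈ verts, pos w ∈ arc s(u, v) → w = u ∨ w = v
  arc_meet : ∀ u v x y, Adj u v → Adj x y → s(u, v) ≠ s(x, y) →
    arc s(u, v) ∩ arc s(x, y) ⊆ pos '' (({u, v} : Set V) ∩ ({x, y} : Set V))

namespace PlaneGraph

variable {V : Type u}

/-- The point set of the drawing of the plane graph. -/
def image (G : PlaneGraph V) : Set (ℝ × ℝ) :=
  G.pos '' G.verts ∪ ⋃ (u : V) (v : V) (_ : G.Adj u v), G.arc s(u, v)

/-- The outer (unbounded) face of the drawing. -/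
def outerFace (G : PlaneGraph V) : Set (ℝ × ℝ) :=
  {p | p ∉ G.image ∧ ¬Bornology.IsBounded (connectedComponentIn G.imageᶜ p)}

/-- A vertex incident with (i.e. on the boundary of) the outer face. -/
def OnOuter (G : PlaneGraph V) (v : V) : Prop := G.pos v ∈ frontier G.outerFace

/-- An edge incident with (i.e. on the boundary of) the outer face. -/
def EdgeOnOuter (G : PlaneGraph V) (u v : V) : Prop :=
  G.arc s(u, v) ⊆ frontier G.outerFace

/-- The vertices of the boundary of the outer face. -/
def boundaryVerts (G : PlaneGraph V) : Set V := {v | v ∈ G.verts ∧ G.OnOuter v}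

/-- Connectivity of a plane graph. -/
def Connected (G : PlaneGraph V) : Prop :=
  G.verts.Nonempty ∧ ∀ u ∈ G.verts, ∀ v ∈ G.verts, Relation.ReflTransGen G.Adj u v

/-- `H` is a (plane) subgraph of `G`, drawn the same way. -/
def IsSubgraph (H G : PlaneGraph V) : Prop :=
  H.verts ⊆ G.verts ∧ (∀ u v, H.Adj u v → G.Adj u v) ∧
  (∀ v ∈ H.verts, H.pos v = G.pos v) ∧
  (∀ u v, H.Adj u v → H.arc s(u, v) = G.arc s(u, v))

/-- Delete a set of vertices (and all incident edges) from a plane graph. -/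
def deleteVerts (G : PlaneGraph V) (s : Set V) : PlaneGraph V where
  verts := G.verts \ s
  Adj u v := G.Adj u v ∧ u ∉ s ∧ v ∉ s
  finite_verts := G.finite_verts.subset Set.diff_subset
  adj_symm := fun u v h => ⟨G.adj_symm u v h.1, h.2.2, h.2.1⟩
  adj_irrefl := fun v h => G.adj_irrefl v h.1
  adj_mem := fun u v h => ⟨G.adj_mem u v h.1, h.2.1⟩
  pos := G.pos
  arc := G.arc
  pos_injOn := G.pos_injOn.mono Set.diff_subset
  arc_arc := fun u v h => G.arc_arc u v h.1
  arc_avoid := fun u v h w hw hm => G.arc_avoid u v h.1 w hw.1 hm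
  arc_meet := fun u v x y h h' hne => G.arc_meet u v x y h.1 h'.1 hne

/-- `G` has a proper coloring from the lists `L`. -/
def HasLColoring (G : PlaneGraph V) (L : V → Finset ℕ) : Prop :=
  ∃ φ : V → ℕ, (∀ v ∈ G.verts, φ v ∈ L v) ∧ ∀ u v, G.Adj u v → φ u ≠ φ v

/-- A vertex of degree exactly one. -/
def DegreeOne (G : PlaneGraph V) (x : V) : Prop :=
  (∃ a, G.Adj x a) ∧ ∀ a b, G.Adj x a → G.Adj x b → a = b

end PlaneGraph

/-- The cyclic successor of an index in a list. -/
def cycNext {V : Type u} (C : List V) (i : Fin C.length) : Fin C.length :=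
  ⟨((i : ℕ) + 1) % C.length, Nat.mod_lt _ (lt_of_le_of_lt (Nat.zero_le _) i.isLt)⟩

/-- The list `C` is a cycle of `G` whose image is exactly the boundary of the
outer face of `G`; i.e. `G` is a plane graph with outer cycle `C`. -/
def PlaneGraph.IsOuterCycle {V : Type u} (G : PlaneGraph V) (C : List V) : Prop :=
  C.Nodup ∧ 3 ≤ C.length ∧ (∀ v ∈ C, v ∈ G.verts) ∧
  (∀ i : Fin C.length, G.Adj (C.get i) (C.get (cycNext C i))) ∧
  frontier G.outerFace =
    G.pos '' {v | v ∈ C} ∪ ⋃ i : Fin C.length, G.arc s(C.get i, C.get (cycNext C i))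

/-- `pq` is an edge of the cycle (given as a list) `C`. -/
def IsCycleEdge {V : Type u} (C : List V) (p q : V) : Prop :=
  ∃ i : Fin C.length, s(p, q) = s(C.get i, C.get (cycNext C i))

/-- `(G, S, L)` is a canvas, where the subgraph `S` of the boundary of the
outer face of `G` is given by its vertex set `Sverts` and adjacency `SAdj`. -/
structure IsCanvas {V : Type u} (G : PlaneGraph V) (Sverts : Set V) (SAdj : V → V → Prop)
    (L : V → Finset ℕ) : Prop where
  sadj_symm : ∀ u v, SAdj u v → SAdj v u
  sadj_sub : ∀ u v, SAdj u v → G.Adj u v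
  sadj_mem : ∀ u v, SAdj u v → u ∈ Sverts
  sverts_sub : Sverts ⊆ G.verts
  sverts_outer : ∀ v ∈ Sverts, G.OnOuter v
  sedges_outer : ∀ u v, SAdj u v → G.EdgeOnOuter u v
  lists_nonempty : ∀ v ∈ G.verts, (L v).Nonempty
  card_inner : ∀ v ∈ G.verts, ¬G.OnOuter v → 5 ≤ (L v).card
  card_outside_S : ∀ v ∈ G.verts, v ∉ Sverts → 3 ≤ (L v).card
  scolorable : ∃ φ : V → ℕ, (∀ v ∈ Sverts, φ v ∈ L v) ∧ ∀ u v, SAdj u v → φ u ≠ φ v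

/-- The adjacency relation of the single-edge path `p₁p₂`. -/
def pathAdj {V : Type u} (p1 p2 : V) : V → V → Prop :=
  fun u v => (u = p1 ∧ v = p2) ∨ (u = p2 ∧ v = p1)

/-- `(G, P, L)` is a canvas whose precolored subgraph is a path `P = p₁p₂` of
length one (in the boundary of the outer face of `G`). -/
def IsPathCanvas {V : Type u} (G : PlaneGraph V) (p1 p2 : V) (L : V → Finset ℕ) : Prop :=
  p1 ≠ p2 ∧ IsCanvas G {p1, p2} (pathAdj p1 p2) L

/-- `c = (c₁, c₂)` is a proper `L`-coloring of the edge `p₁p₂`. -/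
def ProperEdgeColoring {V : Type u} (L : V → Finset ℕ) (p1 p2 : V) (c : ℕ × ℕ) : Prop :=
  c.1 ∈ L p1 ∧ c.2 ∈ L p2 ∧ c.1 ≠ c.2

/-- `Φ_T(P', 𝒞)`: the colorings of the edge `q₁q₂` extendable to an `L`-coloring
of `G` whose restriction to `p₁p₂` lies in `C`. -/
def Phi {V : Type u} (G : PlaneGraph V) (L : V → Finset ℕ) (p1 p2 q1 q2 : V)
    (C : Set (ℕ × ℕ)) : Set (ℕ × ℕ) :=
  {c | ∃ φ : V → ℕ, (∀ v ∈ G.verts, φ v ∈ L v) ∧ (∀ u v, G.Adj u v → φ u ≠ φ v) ∧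
    (φ p1, φ p2) ∈ C ∧ φ q1 = c.1 ∧ φ q2 = c.2}

/-- The set of colors used on the first vertex of the path. -/
def fstColors (C : Set (ℕ × ℕ)) : Set ℕ := Prod.fst '' C

/-- The set of colors used on the second vertex of the path. -/
def sndColors (C : Set (ℕ × ℕ)) : Set ℕ := Prod.snd '' C

/-- A dictatorship: at least two (distinct) colorings, all agreeing on one of
the two vertices (the dictator). -/
def IsDictatorship (C : Set (ℕ × ℕ)) : Prop :=
  (∃ c ∈ C, ∃ d ∈ C, c ≠ d) ∧
  ((∃ a, ∀ c ∈ C, c.1 = a) ∨ (∃ a, ∀ c ∈ C, c.2 = a))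

/-- A democracy: exactly the two colorings `(x, y)` and `(y, x)`. -/
def IsDemocracy (C : Set (ℕ × ℕ)) : Prop :=
  ∃ x y : ℕ, x ≠ y ∧ C = {(x, y), (y, x)}

/-- A government is a dictatorship or a democracy. -/
def IsGovernment (C : Set (ℕ × ℕ)) : Prop := IsDictatorship C ∨ IsDemocracy C

/-- A confederacy: not a government, but the union of two governments. -/
def IsConfederacy (C : Set (ℕ × ℕ)) : Prop :=
  ¬IsGovernment C ∧ ∃ C1 C2 : Set (ℕ × ℕ), IsGovernment C1 ∧ IsGovernment C2 ∧ C = C1 ∪ C2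

/-- The canvas `(G, p₁p₂, L)` is a harmonica from the path `p₁p₂` to the path
`q₁q₂` with government `C`. -/
inductive IsHarmonica {V : Type u} (L : V → Finset ℕ) :
    PlaneGraph V → V → V → V → V → Set (ℕ × ℕ) → Prop where
  /-- Rule (i): `G = P = P'`. -/
  | same (G : PlaneGraph V) (p1 p2 q1 q2 : V) (C : Set (ℕ × ℕ))
      (hcanvas : IsPathCanvas G p1 p2 L)
      (hproper : ∀ c ∈ C, ProperEdgeColoring L p1 p2 c)
      (hgov : IsGovernment C)
      (hq : (q1 = p1 ∧ q2 = p2) ∨ (q1 = p2 ∧ q2 = p1))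
      (hverts : G.verts = {p1, p2})
      (hedges : ∀ u v, G.Adj u v → pathAdj p1 p2 u v) :
      IsHarmonica L G p1 p2 q1 q2 C
  /-- Rule (ii): `C` is a dictatorship, `G = P ∪ P'`, `V(P) ∩ V(P') = {z}`
  where `z` is the dictator. -/
  | cherry (G : PlaneGraph V) (p1 p2 q1 q2 z : V) (C : Set (ℕ × ℕ))
      (hcanvas : IsPathCanvas G p1 p2 L)
      (hproper : ∀ c ∈ C, ProperEdgeColoring L p1 p2 c)
      (hdict : IsDictatorship C)
      (hq : q1 ≠ q2) (hqadj : G.Adj q1 q2) (hqout : G.EdgeOnOuter q1 q2)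
      (hverts : G.verts = {p1, p2, q1, q2})
      (hedges : ∀ u v, G.Adj u v → pathAdj p1 p2 u v ∨ pathAdj q1 q2 u v)
      (hz : (({p1, p2} : Set V) ∩ ({q1, q2} : Set V)) = {z})
      (hzdict : (z = p1 ∧ ∃ a, ∀ c ∈ C, c.1 = a) ∨ (z = p2 ∧ ∃ a, ∀ c ∈ C, c.2 = a)) :
      IsHarmonica L G p1 p2 q1 q2 C
  /-- Rule (iii): `C` is a dictatorship with dictator `z ∈ V(P)` in color `c`,
  sitting on a triangle `z u₁ u₂`. -/
  | dict (G : PlaneGraph V) (p1 p2 q1 q2 z w u1 u2 : V) (c : ℕ) (L0 : Finset ℕ)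
      (C C' : Set (ℕ × ℕ))
      (hcanvas : IsPathCanvas G p1 p2 L)
      (hproper : ∀ d ∈ C, ProperEdgeColoring L p1 p2 d)
      (hdict : IsDictatorship C)
      (hq : q1 ≠ q2) (hqadj : G.Adj q1 q2) (hqout : G.EdgeOnOuter q1 q2)
      (hz : (z = p1 ∧ w = p2 ∧ (∀ d ∈ C, d.1 = c) ∧
              (u1 = w → sndColors C = (L0 : Set ℕ)) ∧
              (u2 = w → sndColors C = (L0 : Set ℕ))) ∨
            (z = p2 ∧ w = p1 ∧ (∀ d ∈ C, d.2 = c) ∧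
              (u1 = w → fstColors C = (L0 : Set ℕ)) ∧
              (u2 = w → fstColors C = (L0 : Set ℕ))))
      (hzu1 : G.Adj z u1) (hzu2 : G.Adj z u2) (hu12 : G.Adj u1 u2)
      (hL0 : L0.card = 2)
      (hLu1 : u1 ∉ ({p1, p2} : Set V) → L u1 = L0 ∪ {c})
      (hLu2 : u2 ∉ ({p1, p2} : Set V) → L u2 = L0 ∪ {c})
      (hu1P : u1 ∈ ({p1, p2} : Set V) → u1 = w)
      (hu2P : u2 ∈ ({p1, p2} : Set V) → u2 = w)
      (hdem : IsDemocracy C')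
      (hC'1 : fstColors C' = (L0 : Set ℕ)) (hC'2 : sndColors C' = (L0 : Set ℕ))
      (hrec : IsHarmonica L (G.deleteVerts (({p1, p2} : Set V) \ {u1, u2})) u1 u2 q1 q2 C') :
      IsHarmonica L G p1 p2 q1 q2 C
  /-- Rule (iv), with `i = 1`: `C` is a democracy, `z` is a common neighbor of
  `p₁, p₂`, and `p₁` is deleted. -/
  | demo1 (G : PlaneGraph V) (p1 p2 q1 q2 z : V) (a b c : ℕ) (L0 : Finset ℕ)
      (C C' : Set (ℕ × ℕ))
      (hcanvas : IsPathCanvas G p1 p2 L)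
      (hproper : ∀ d ∈ C, ProperEdgeColoring L p1 p2 d)
      (hdemC : IsDemocracy C)
      (hq : q1 ≠ q2) (hqadj : G.Adj q1 q2) (hqout : G.EdgeOnOuter q1 q2)
      (hz1 : G.Adj z p1) (hz2 : G.Adj z p2)
      (hLz : L z = L0 ∪ {c})
      (hC1 : fstColors C = (L0 : Set ℕ)) (hC2 : sndColors C = (L0 : Set ℕ))
      (hab : a ≠ b) (hL0ab : (L0 : Set ℕ) = {a, b})
      (hC' : C' = {(c, a), (c, b)})
      (hrec : IsHarmonica L (G.deleteVerts {p1}) z p2 q1 q2 C') :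
      IsHarmonica L G p1 p2 q1 q2 C
  /-- Rule (iv), with `i = 2`: `C` is a democracy, `z` is a common neighbor of
  `p₁, p₂`, and `p₂` is deleted. -/
  | demo2 (G : PlaneGraph V) (p1 p2 q1 q2 z : V) (a b c : ℕ) (L0 : Finset ℕ)
      (C C' : Set (ℕ × ℕ))
      (hcanvas : IsPathCanvas G p1 p2 L)
      (hproper : ∀ d ∈ C, ProperEdgeColoring L p1 p2 d)
      (hdemC : IsDemocracy C)
      (hq : q1 ≠ q2) (hqadj : G.Adj q1 q2) (hqout : G.EdgeOnOuter q1 q2)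
      (hz1 : G.Adj z p1) (hz2 : G.Adj z p2)
      (hLz : L z = L0 ∪ {c})
      (hC1 : fstColors C = (L0 : Set ℕ)) (hC2 : sndColors C = (L0 : Set ℕ))
      (hab : a ≠ b) (hL0ab : (L0 : Set ℕ) = {a, b})
      (hC' : C' = {(c, a), (c, b)})
      (hrec : IsHarmonica L (G.deleteVerts {p2}) z p1 q1 q2 C') :
      IsHarmonica L G p1 p2 q1 q2 C

/-- `(G, L)` is a coloring harmonica from `uv` to `w` (source `Sum.inr (u, v)`)
or from `u` to `w` (source `Sum.inl u`). -/
inductive IsColoringHarmonica {V : Type u} [DecidableEq V] :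
    PlaneGraph V → (V → Finset ℕ) → V ⊕ V × V → V → Prop where
  /-- `G` is a triangle with vertex set `{u, v, w}`, `L(u) = L(v) = L(w)` and
  `|L(u)| = 2`. -/
  | tri (G : PlaneGraph V) (L : V → Finset ℕ) (u v w : V)
      (hconn : G.Connected) (huv : u ≠ v) (huw : u ≠ w) (hvw : v ≠ w)
      (hu : G.OnOuter u) (hv : G.OnOuter v) (hw : G.OnOuter w)
      (huvout : G.EdgeOnOuter u v)
      (hverts : G.verts = {u, v, w})
      (hadjuv : G.Adj u v) (hadjvw : G.Adj v w) (hadjuw : G.Adj u w)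
      (hLuv : L u = L v) (hLvw : L v = L w) (hcard : (L u).card = 2) :
      IsColoringHarmonica G L (Sum.inr (u, v)) w
  /-- There is a triangle `uvz` on the outer face; delete one or both of
  `u, v` and recurse from `z`. -/
  | step (G : PlaneGraph V) (L : V → Finset ℕ) (u v w z : V) (s : Set V)
      (hconn : G.Connected) (huv : u ≠ v) (huw : u ≠ w) (hvw : v ≠ w)
      (hu : G.OnOuter u) (hv : G.OnOuter v) (hw : G.OnOuter w)
      (huvout : G.EdgeOnOuter u v)
      (hadjuv : G.Adj u v) (hadjuz : G.Adj u z) (hadjvz : G.Adj v z)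
      (hz : G.OnOuter z)
      (hLuv : L u = L v) (hsub : L u ⊆ L z)
      (hcardu : (L u).card = 2) (hcardz : (L z).card = 3)
      (hs : s = {u} ∨ s = {v} ∨ s = ({u, v} : Set V))
      (hrec : IsColoringHarmonica (G.deleteVerts s)
        (Function.update L z (L z \ L u)) (Sum.inl z) w) :
      IsColoringHarmonica G L (Sum.inr (u, v)) w
  /-- `|L(u)| = 1`, `u` sits on a triangle `uxy`; delete `u` and recurse
  from `xy`. -/
  | vert (G : PlaneGraph V) (L : V → Finset ℕ) (u w x y : V)
      (hconn : G.Connected) (huw : u ≠ w)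
      (hu : G.OnOuter u) (hw : G.OnOuter w)
      (hx : G.OnOuter x) (hy : G.OnOuter y)
      (hadjux : G.Adj u x) (hadjuy : G.Adj u y) (hadjxy : G.Adj x y)
      (hcardu : (L u).card = 1)
      (hLxy : L x \ L u = L y \ L u) (hcardx : (L x \ L u).card = 2)
      (hrec : IsColoringHarmonica (G.deleteVerts {u})
        (Function.update (Function.update L x (L x \ L u)) y (L y \ L u))
        (Sum.inr (x, y)) w) :
      IsColoringHarmonica G L (Sum.inl u) w

/-- `(G, L)` contains a coloring harmonica `(H, L')` with the given source and
target: `H` is a subgraph of `G` and `L'` agrees with `L` on `V(H)`. -/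
def ContainsColoringHarmonica {V : Type u} [DecidableEq V] (G : PlaneGraph V)
    (L : V → Finset ℕ) (st : V ⊕ V × V) (w : V) : Prop :=
  ∃ (H : PlaneGraph V) (L' : V → Finset ℕ), H.IsSubgraph G ∧
    (∀ x ∈ H.verts, L' x = L x) ∧ IsColoringHarmonica H L' st w

/-- `v` is a cutvertex of the boundary of the outer face of `G`. -/
def BoundaryCutvertex {V : Type u} (G : PlaneGraph V) (v : V) : Prop :=
  ∃ a b : V, a ∈ G.boundaryVerts ∧ b ∈ G.boundaryVerts ∧ a ≠ v ∧ b ≠ v ∧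
    Relation.ReflTransGen (fun x y => G.Adj x y ∧ G.EdgeOnOuter x y) a b ∧
    ¬Relation.ReflTransGen
      (fun x y => G.Adj x y ∧ G.EdgeOnOuter x y ∧ x ≠ v ∧ y ≠ v) a b

open Classical in
/-- The list assignment of the democratic reduction `T(P, L0, x)`:
remove the colors of `L0` from the list of `x` and from the lists of all
neighbors of `P` other than `y`. -/
noncomputable def reducedL {V : Type u} (G : PlaneGraph V) (L : V → Finset ℕ)
    (L0 : Finset ℕ) (Q : List V) (x y : V) : V → Finset ℕ := fun w =>
  if w = x ∨ (w ≠ y ∧ ∃ p ∈ Q, G.Adj w p) then L w \ L0 else L w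

/-- The vertex set of the precolored subgraph of the democratic reduction:
`S ∖ V(P)`, together with `x` as an isolated vertex if its new list is
smaller than 3. -/
def reducedSverts {V : Type u} (Sverts : Set V) (Q : List V) (x : V)
    (L' : V → Finset ℕ) : Set V :=
  {v | (v ∈ Sverts ∧ v ∉ Q) ∨ (v = x ∧ (L' x).card < 3)}

/-- The adjacency of the precolored subgraph of the democratic reduction:
`S ∖ V(P)`. -/
def reducedSAdj {V : Type u} (SAdj : V → V → Prop) (Q : List V) : V → V → Prop :=
  fun u v => SAdj u v ∧ u ∉ Q ∧ v ∉ Q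

/-!
Colour the path by alternating between two colours of `L0`, choosing the phase so that the last
vertex avoids the colour of `y`. An edge leaving the path can only be bad if it goes to `y`, whose
list need not have been reduced, from a vertex of the path before the last one. Such an edge is no
chord, so its end on the path would have three neighbours on the boundary of the outer face: its
predecessor (or `x`), its successor, and `y`.

That a vertex `u` which is not a cutvertex has at most two such neighbours is topology. Otherwise
three arcs `A i`, `A j`, `A k` join `u` to one component `R` of the drawing of `G - u`, and the
outer face `U` accumulates at every point of them. The set `R ∪ A i ∪ A j` separates some point
`d` from `U`. The component of `d` in its complement reaches `A i` but not `A k`, so `d` can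
escape to `U` across `A i`, and `R ∪ A k ∪ A j` does not separate `d` from `U`; nor does `R ∪ A k
∪ A i`. These two sets meet in the connected set `R ∪ A k`, so by Janiszewski's theorem neither
does their union, a contradiction. Separation is detected by Eilenberg's criterion: a compact set
`K` does not separate `p` from `q` if and only if `(z - q) / (z - p)` has a continuous logarithm
on `K`.
-/

section ContinuousLog

open Complex

variable {X : Type*} [TopologicalSpace X]

/-- `f` has a continuous logarithm on `K`. Only the restriction of `f` to `K` matters, and `f` is
then automatically continuous and nonvanishing on `K`. -/
def HasContinuousLogOn (f : X → ℂ) (K : Set X) : Prop :=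
  ∃ g : X → ℂ, ContinuousOn g K ∧ ∀ z ∈ K, exp (g z) = f z

namespace HasContinuousLogOn

variable {f : X → ℂ} {K A B : Set X}

lemma mono (h : HasContinuousLogOn f B) (hAB : A ⊆ B) : HasContinuousLogOn f A :=
  let ⟨g, hg, hgf⟩ := h
  ⟨g, hg.mono hAB, fun z hz => hgf z (hAB hz)⟩

lemma congr {f' : X → ℂ} (h : HasContinuousLogOn f K) (hff' : EqOn f f' K) :
    HasContinuousLogOn f' K :=
  let ⟨g, hg, hgf⟩ := h
  ⟨g, hg, fun z hz => (hgf z hz).trans (hff' hz)⟩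

lemma inv (h : HasContinuousLogOn f K) : HasContinuousLogOn f⁻¹ K :=
  let ⟨g, hg, hgf⟩ := h
  ⟨-g, hg.neg, fun z hz => by simp [exp_neg, hgf z hz]⟩

lemma of_restrict (h : HasContinuousLogOn (K.domRestrict f) univ) : HasContinuousLogOn f K := by
  classical
  obtain ⟨g, hg, hgf⟩ := h
  have hext : K.domRestrict (fun z => if hz : z ∈ K then g ⟨z, hz⟩ else 0) = g := by
    ext z; simp
  refine ⟨fun z => if hz : z ∈ K then g ⟨z, hz⟩ else 0, ?_, fun z hz => ?_⟩
  · rwa [continuousOn_iff_continuous_domRestrict, hext, ← continuousOn_univ]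
  · simpa [hz] using hgf ⟨z, hz⟩ trivial

end HasContinuousLogOn

lemma exists_eq_add_const_of_exp_eq {S : Set X} (hS : IsPreconnected S)
    {g₁ g₂ : X → ℂ} (h₁ : ContinuousOn g₁ S) (h₂ : ContinuousOn g₂ S)
    (h : ∀ z ∈ S, exp (g₁ z) = exp (g₂ z)) :
    ∃ c : ℂ, exp c = 1 ∧ ∀ z ∈ S, g₁ z = g₂ z + c := by
  obtain rfl | ⟨a, ha⟩ := S.eq_empty_or_nonempty
  · exact ⟨0, by simp, by simp⟩
  have : PreconnectedSpace S := isPreconnected_iff_preconnectedSpace.1 hS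
  rw [continuousOn_iff_continuous_domRestrict] at h₁ h₂
  have hconst := isCoveringMap_exp.const_of_comp (h₁.sub h₂) fun z w => Subtype.ext <| by
    simp [exp_sub, h z z.2, h w w.2]
  refine ⟨g₁ a - g₂ a, by simp [exp_sub, h a ha], fun z hz => ?_⟩
  have hza : g₁ z - g₂ z = g₁ a - g₂ a := hconst ⟨z, hz⟩ ⟨a, ha⟩
  linear_combination hza

namespace HasContinuousLogOn

variable {f : X → ℂ} {K A B : Set X}

lemma union_of_continuousOn_union
    (hglue : ∀ g : X → ℂ, ContinuousOn g A → ContinuousOn g B → ContinuousOn g (A ∪ B))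
    (hAB : IsPreconnected (A ∩ B)) (hA : HasContinuousLogOn f A) (hB : HasContinuousLogOn f B) :
    HasContinuousLogOn f (A ∪ B) := by
  classical
  obtain ⟨g₁, hg₁, hf₁⟩ := hA
  obtain ⟨g₂, hg₂, hf₂⟩ := hB
  obtain ⟨c, hc, hgc⟩ := exists_eq_add_const_of_exp_eq hAB (hg₁.mono inter_subset_left)
    (hg₂.mono inter_subset_right) fun z hz => by rw [hf₁ z hz.1, hf₂ z hz.2]
  have eqOn_A : EqOn (A.piecewise g₁ fun z => g₂ z + c) g₁ A := A.piecewise_eqOn _ _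
  have eqOn_B : EqOn (A.piecewise g₁ fun z => g₂ z + c) (fun z => g₂ z + c) B := fun z hz => by
    by_cases hzA : z ∈ A
    · rw [eqOn_A hzA, hgc z ⟨hzA, hz⟩]
    · rw [piecewise_eq_of_notMem _ _ _ hzA]
  refine ⟨_, hglue _ (hg₁.congr eqOn_A) ((hg₂.add continuousOn_const).congr eqOn_B), ?_⟩
  rintro z (hz | hz)
  · rw [eqOn_A hz, hf₁ z hz]
  · rw [eqOn_B hz, exp_add, hc, mul_one, hf₂ z hz]

lemma union_of_isClosed (hAc : IsClosed A) (hBc : IsClosed B) (hAB : IsPreconnected (A ∩ B))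
    (hA : HasContinuousLogOn f A) (hB : HasContinuousLogOn f B) : HasContinuousLogOn f (A ∪ B) :=
  union_of_continuousOn_union (fun _ h₁ h₂ => h₁.union_of_isClosed h₂ hAc hBc) hAB hA hB

lemma union_of_isOpen (hAo : IsOpen A) (hBo : IsOpen B) (hAB : IsPreconnected (A ∩ B))
    (hA : HasContinuousLogOn f A) (hB : HasContinuousLogOn f B) : HasContinuousLogOn f (A ∪ B) :=
  union_of_continuousOn_union (fun _ h₁ h₂ => h₁.union_of_isOpen h₂ hAo hBo) hAB hA hB

lemma of_homotopy (H : C(unitInterval × X, ℂ)) (hH : ∀ q, H q ≠ 0)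
    (h₀ : HasContinuousLogOn (fun x => H (0, x)) univ) :
    HasContinuousLogOn (fun x => H (1, x)) univ := by
  obtain ⟨g, hg, hgH⟩ := h₀
  let H' : C(unitInterval × X, {z : ℂ // z ≠ 0}) := ⟨fun q => ⟨H q, hH q⟩, by fun_prop⟩
  have hH'g : ∀ x, H' (0, x) = ⟨exp (g x), exp_ne_zero _⟩ :=
    fun x => Subtype.ext (hgH x trivial).symm
  let Φ := isCoveringMap_exp.liftHomotopy H' ⟨g, continuousOn_univ.1 hg⟩ hH'g
  have hΦ : ∀ q, exp (Φ q) = H q := fun q =>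
    congrArg Subtype.val (congrFun (isCoveringMap_exp.liftHomotopy_lifts H' _ hH'g) q)
  exact ⟨fun x => Φ (1, x), by fun_prop, fun x _ => hΦ (1, x)⟩

lemma of_contractibleSpace [ContractibleSpace K] (hf : ContinuousOn f K)
    (hf₀ : ∀ z ∈ K, f z ≠ 0) : HasContinuousLogOn f K := by
  obtain ⟨z₀, ⟨H⟩⟩ := id_nullhomotopic K
  rw [continuousOn_iff_continuous_domRestrict] at hf
  have hlog := of_homotopy ⟨fun q => K.domRestrict f (H.symm q), hf.comp H.symm.continuous⟩
    (fun q => hf₀ _ (H.symm q).2)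
    ⟨fun _ => log (f z₀), continuousOn_const, fun z _ => by simp [exp_log (hf₀ _ z₀.2)]⟩
  exact of_restrict (hlog.congr fun z _ => by simp)

end HasContinuousLogOn

lemma not_hasContinuousLogOn_sphere (d : ℂ) {r : ℝ} (hr : 0 < r) :
    ¬HasContinuousLogOn (fun z => z - d) (Metric.sphere d r) := by
  rintro ⟨g, hg, hgd⟩
  have hmem : ∀ t, circleMap d r t ∈ Metric.sphere d r := circleMap_mem_sphere d hr.le
  obtain ⟨c, -, hc⟩ := exists_eq_add_const_of_exp_eq isPreconnected_univ
    (g₁ := fun t : ℝ => g (circleMap d r t)) (g₂ := fun t : ℝ => log r + t * I)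
    (hg.comp_continuous (continuous_circleMap d r) hmem).continuousOn (by fun_prop) fun t _ => by
      rw [hgd _ (hmem t), exp_add, exp_log (by exact_mod_cast hr.ne')]
      simp [circleMap]
  have hturn : g (circleMap d r (2 * Real.pi)) = g (circleMap d r 0) := by
    rw [(periodic_circleMap d r).eq]
  have hpi : ((2 * Real.pi : ℝ) : ℂ) * I = 0 := by
    have hc₀ := hc 0 trivial
    rw [ofReal_zero] at hc₀
    linear_combination hc₀ - hc (2 * Real.pi) trivial + hturn
  simp [Real.pi_ne_zero] at hpi

end ContinuousLog

section Components

variable {X : Type*} [TopologicalSpace X]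

lemma isPreconnected_pathComponentIn (F : Set X) (x : X) :
    IsPreconnected (pathComponentIn F x) := by
  by_cases hx : x ∈ F
  · exact (isPathConnected_pathComponentIn hx).isConnected.isPreconnected
  · rw [not_nonempty_iff_eq_empty.1 (mt pathComponentIn_nonempty_iff.1 hx)]
    exact isPreconnected_empty

lemma joinedIn_of_mem_closure [LocallyPathConnectedSpace X] {F U : Set X} (hF : IsOpen F)
    (hU : IsPreconnected U) (hUF : U ⊆ F) {a b : X} (ha : a ∈ closure U) (haF : a ∈ F)
    (hb : b ∈ closure U) (hbF : b ∈ F) : JoinedIn F a b := by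
  have hUab : IsPreconnected (insert a (insert b U)) :=
    hU.subset_closure ((subset_insert _ _).trans (subset_insert _ _))
      (insert_subset ha (insert_subset hb subset_closure))
  have hsub : insert a (insert b U) ⊆ connectedComponentIn F a :=
    hUab.subset_connectedComponentIn (mem_insert _ _) (insert_subset haF (insert_subset hbF hUF))
  have hconn : IsPathConnected (connectedComponentIn F a) :=
    hF.connectedComponentIn.isConnected_iff_isPathConnected.1
      (isConnected_connectedComponentIn_iff.2 haF)
  exact (hconn.joinedIn a (hsub (by simp)) b (hsub (by simp))).mono
    (connectedComponentIn_subset _ _)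

lemma frontier_pathComponentIn_subset_compl [LocallyPathConnectedSpace X] {F : Set X}
    (hF : IsOpen F) (x : X) : frontier (pathComponentIn F x) ⊆ Fᶜ := by
  intro a ha haF
  rw [(hF.pathComponentIn x).frontier_eq] at ha
  obtain ⟨b, hb⟩ := closure_nonempty_iff.1 ⟨a, ha.1⟩
  have hx : x ∈ F := hb.source_mem
  exact ha.2 (joinedIn_of_mem_closure hF (isPreconnected_pathComponentIn F x)
    pathComponentIn_subset (subset_closure (mem_pathComponentIn_self hx)) hx ha.1 haF)

variable {E : Type*} [NormedAddCommGroup E] [NormedSpace ℝ E]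

lemma isPreconnected_setOf_lt_norm (hE : 1 < Module.rank ℝ E) {r : ℝ} (hr : 0 ≤ r) :
    IsPreconnected {z : E | r < ‖z‖} := by
  have hpolar : {z : E | r < ‖z‖} = (fun p : ℝ × E => p.1 • p.2) '' Ioi r ×ˢ Metric.sphere 0 1 := by
    ext z
    refine ⟨fun hz => ⟨(‖z‖, ‖z‖⁻¹ • z), ?_⟩, ?_⟩
    · have hz₀ : ‖z‖ ≠ 0 := (hr.trans_lt hz).ne'
      exact ⟨⟨hz, by simp [norm_smul, hz₀]⟩, smul_inv_smul₀ hz₀ z⟩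
    · rintro ⟨⟨t, w⟩, ⟨ht, hw⟩, rfl⟩
      have hrt : r < t := ht
      simpa [norm_smul, mem_sphere_zero_iff_norm.1 hw, abs_of_pos (hr.trans_lt hrt)] using hrt
  rw [hpolar]
  exact (isPreconnected_Ioi.prod (isPreconnected_sphere hE 0 1)).image _
    continuous_smul.continuousOn

lemma exists_isPreconnected_of_not_isBounded (hE : 1 < Module.rank ℝ E) {K U V : Set E}
    (hK : Bornology.IsBounded K) (hU : IsPreconnected U) (hUK : U ⊆ Kᶜ)
    (hUb : ¬Bornology.IsBounded U) (hV : IsPreconnected V) (hVK : V ⊆ Kᶜ)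
    (hVb : ¬Bornology.IsBounded V) : ∃ W, IsPreconnected W ∧ W ⊆ Kᶜ ∧ U ⊆ W ∧ V ⊆ W := by
  obtain ⟨r, hr, hKr⟩ := hK.subset_closedBall_lt 0 0
  have hext : {z : E | r < ‖z‖} ⊆ Kᶜ := fun z hz hzK =>
    (not_le.2 hz) (mem_closedBall_zero_iff.1 (hKr hzK))
  have hmeets : ∀ {U : Set E}, ¬Bornology.IsBounded U → (U ∩ {z : E | r < ‖z‖}).Nonempty := by
    intro U hUb
    by_contra! hempty
    exact hUb ((Metric.isBounded_closedBall (x := (0 : E)) (r := r)).subset fun z hz =>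
      mem_closedBall_zero_iff.2 <| not_lt.1 fun hrz => hempty.subset ⟨hz, hrz⟩)
  have hconn := isPreconnected_setOf_lt_norm hE hr.le
  have hUext := hU.union' (hmeets hUb) hconn
  refine ⟨U ∪ {z : E | r < ‖z‖} ∪ V, hUext.union' ?_ hV, ?_, ?_, ?_⟩
  · exact (hmeets hVb).mono fun z hz => ⟨Or.inr hz.2, hz.1⟩
  · exact union_subset (union_subset hUK hext) hVK
  · exact fun z hz => Or.inl (Or.inl hz)
  · exact subset_union_right

end Components

section PlaneSeparation

open Complex

variable {K A B R : Set ℂ} {p q : ℂ}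

lemma hasContinuousLogOn_of_joinedIn_compl (h : JoinedIn Kᶜ p q) :
    HasContinuousLogOn (fun z => (z - q) / (z - p)) K := by
  obtain ⟨γ, hγ⟩ := h
  have hsub : ∀ (z : K) t, (z : ℂ) - γ t ≠ 0 := fun z t hz => hγ t (sub_eq_zero.1 hz ▸ z.2)
  have hp : ∀ z : K, (z : ℂ) - p ≠ 0 := fun z => by simpa using hsub z 0
  have hlog := HasContinuousLogOn.of_homotopy
    (⟨fun s => ((s.2 : ℂ) - γ s.1) / ((s.2 : ℂ) - p),
      Continuous.div (by fun_prop) (by fun_prop) fun s => hp s.2⟩ : C(unitInterval × K, ℂ))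
    (fun s => div_ne_zero (hsub _ _) (hp _))
    ⟨fun _ => 0, continuousOn_const, fun z _ => by simp [hp]⟩
  exact HasContinuousLogOn.of_restrict (hlog.congr fun z _ => by simp)

/- Otherwise `(z - p) exp G` on the component of `q`, with `G` a continuous extension of the
logarithm, would glue with `z - q` to a nonvanishing function on the plane whose restriction to a
large circle has no logarithm. -/
lemma joinedIn_compl_of_isBounded (hK : IsClosed K) (hp : p ∉ K) (hq : q ∉ K)
    (hb : Bornology.IsBounded (pathComponentIn Kᶜ q))
    (h : HasContinuousLogOn (fun z => (z - q) / (z - p)) K) : JoinedIn Kᶜ p q := by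
  classical
  by_contra hpq
  set U := pathComponentIn Kᶜ q
  have hpU : p ∉ U := fun hp => hpq (JoinedIn.symm hp)
  have hqU : q ∈ U := mem_pathComponentIn_self hq
  obtain ⟨g, hg, hgf⟩ := h
  obtain ⟨G, hG⟩ := ContinuousMap.exists_restrict_eq hK
    (⟨K.domRestrict g, continuousOn_iff_continuous_domRestrict.1 hg⟩ : C(K, ℂ))
  have hGg : ∀ z ∈ K, G z = g z := fun z hz => DFunLike.congr_fun hG ⟨z, hz⟩
  have hcont : Continuous fun z => if z ∈ U then (z - p) * exp (G z) else z - q := by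
    refine Continuous.if (fun a ha => ?_) (by fun_prop) (by fun_prop)
    have haK : a ∈ K := by
      simpa using frontier_pathComponentIn_subset_compl hK.isOpen_compl q ha
    have hap : a - p ≠ 0 := sub_ne_zero.2 fun h => hp (h ▸ haK)
    rw [hGg a haK, hgf a haK, mul_div_cancel₀ _ hap]
  have hne : ∀ z, (if z ∈ U then (z - p) * exp (G z) else z - q) ≠ 0 := fun z => by
    split_ifs with hz
    · exact mul_ne_zero (sub_ne_zero.2 fun h => hpU (h ▸ hz)) (exp_ne_zero _)
    · exact sub_ne_zero.2 fun h => hz (h ▸ hqU)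
  have : ContractibleSpace (univ : Set ℂ) := (Homeomorph.Set.univ ℂ).contractibleSpace
  have hlog := HasContinuousLogOn.of_contractibleSpace (K := univ) hcont.continuousOn
    fun z _ => hne z
  obtain ⟨r, hr⟩ := hb.subset_ball q
  refine not_hasContinuousLogOn_sphere q (Metric.pos_of_mem_ball (hr hqU))
    ((hlog.mono (subset_univ _)).congr fun z hz => if_neg fun hzU => ?_)
  exact (Metric.mem_ball.1 (hr hzU)).ne (Metric.mem_sphere.1 hz)

theorem joinedIn_compl_iff_hasContinuousLogOn (hK : IsCompact K) (hp : p ∉ K) (hq : q ∉ K) :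
    JoinedIn Kᶜ p q ↔ HasContinuousLogOn (fun z => (z - q) / (z - p)) K := by
  refine ⟨hasContinuousLogOn_of_joinedIn_compl, fun h => ?_⟩
  by_cases hqb : Bornology.IsBounded (pathComponentIn Kᶜ q)
  · exact joinedIn_compl_of_isBounded hK.isClosed hp hq hqb h
  by_cases hpb : Bornology.IsBounded (pathComponentIn Kᶜ p)
  · exact (joinedIn_compl_of_isBounded hK.isClosed hq hp hpb
      (h.inv.congr fun z _ => inv_div _ _)).symm
  obtain ⟨W, hW, hWK, hpW, hqW⟩ := exists_isPreconnected_of_not_isBounded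
    (by simp [rank_real_complex]) hK.isBounded
    (isPreconnected_pathComponentIn _ p) pathComponentIn_subset hpb
    (isPreconnected_pathComponentIn _ q) pathComponentIn_subset hqb
  exact joinedIn_of_mem_closure hK.isClosed.isOpen_compl hW hWK
    (subset_closure (hpW (mem_pathComponentIn_self hp))) hp
    (subset_closure (hqW (mem_pathComponentIn_self hq))) hq

theorem joinedIn_compl_union (hA : IsCompact A) (hB : IsCompact B) (hAB : IsPreconnected (A ∩ B))
    (hpA : JoinedIn Aᶜ p q) (hpB : JoinedIn Bᶜ p q) : JoinedIn (A ∪ B)ᶜ p q :=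
  (joinedIn_compl_iff_hasContinuousLogOn (hA.union hB)
    (not_or.2 ⟨hpA.source_mem, hpB.source_mem⟩) (not_or.2 ⟨hpA.target_mem, hpB.target_mem⟩)).2 <|
  (hasContinuousLogOn_of_joinedIn_compl hpA).union_of_isClosed hA.isClosed hB.isClosed hAB
    (hasContinuousLogOn_of_joinedIn_compl hpB)

lemma not_joinedIn_compl_sphere (c : ℂ) {r : ℝ} (hp : dist p c < r) (hq : r < dist q c) :
    ¬JoinedIn (Metric.sphere c r)ᶜ p q := by
  rintro ⟨γ, hγ⟩
  obtain ⟨t, ht⟩ := intermediate_value_univ (0 : unitInterval) 1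
    (f := fun t => dist (γ t) c) (by fun_prop) (by simpa using ⟨hp.le, hq.le⟩)
  exact hγ t ht

/- A logarithm of `(z - r₁) / (z - r₂)` exists off `R` and off `B`, so if `R ∪ B` did not separate
the component of `p`, the two could be glued along a circle separating `r₁` from `r₂`. -/
theorem exists_not_joinedIn_compl_union (hR : IsCompact R) (hRp : IsPathConnected R)
    (hB : IsCompact B) (hBp : IsPathConnected B) {r₁ r₂ : ℂ} (hne : r₁ ≠ r₂)
    (h₁ : r₁ ∈ R ∩ B) (h₂ : r₂ ∈ R ∩ B)
    (hBR : ∀ z ∈ B, z ≠ r₁ → z ≠ r₂ → JoinedIn Rᶜ p z) :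
    ∃ d, JoinedIn Rᶜ p d ∧ d ∉ B ∧ ¬JoinedIn (R ∪ B)ᶜ p d := by
  by_contra! hcon
  have hlogR : HasContinuousLogOn (fun z => (z - r₁) / (z - r₂)) (pathComponentIn Rᶜ p) :=
    (hasContinuousLogOn_of_joinedIn_compl (by simpa using hRp.joinedIn _ h₂.1 _ h₁.1)).mono
      pathComponentIn_subset
  have hlogB : HasContinuousLogOn (fun z => (z - r₁) / (z - r₂)) Bᶜ :=
    hasContinuousLogOn_of_joinedIn_compl (by simpa using hBp.joinedIn _ h₂.2 _ h₁.2)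
  have hinter : pathComponentIn Rᶜ p ∩ Bᶜ = pathComponentIn (R ∪ B)ᶜ p := by
    refine Subset.antisymm (fun z hz => hcon z hz.1 hz.2) fun z hz => ⟨?_, ?_⟩
    · exact JoinedIn.mono hz (compl_subset_compl.2 subset_union_left)
    · exact fun hzB => hz.target_mem (Or.inr hzB)
  have hpre : IsPreconnected (pathComponentIn Rᶜ p ∩ Bᶜ) := by
    rw [hinter]
    exact isPreconnected_pathComponentIn _ p
  have hlog := hlogR.union_of_isOpen (hR.isClosed.isOpen_compl.pathComponentIn p)
    hB.isClosed.isOpen_compl hpre hlogB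
  obtain ⟨ρ, hρ, hρd⟩ := exists_between (dist_pos.2 hne.symm)
  have hsphere : Metric.sphere r₁ ρ ⊆ pathComponentIn Rᶜ p ∪ Bᶜ := fun z hz => by
    by_cases hzB : z ∈ B
    · refine Or.inl (hBR z hzB ?_ ?_) <;> rintro rfl
      · exact hρ.ne (by simpa using Metric.mem_sphere.1 hz)
      · exact hρd.ne' (Metric.mem_sphere.1 hz)
    · exact Or.inr hzB
  exact not_joinedIn_compl_sphere r₁ (by simpa using hρ) hρd <|
    ((joinedIn_compl_iff_hasContinuousLogOn (isCompact_sphere r₁ ρ)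
      (fun h => hρd.ne' (Metric.mem_sphere.1 h))
      (fun h => hρ.ne (by simpa using Metric.mem_sphere.1 h))).2 (hlog.mono hsphere)).symm

end PlaneSeparation

section Arc

variable {X Y : Type*} [TopologicalSpace X] [TopologicalSpace Y]

/-- `A` is a simple arc with ends `a` and `b`. -/
def IsArc (A : Set X) (a b : X) : Prop :=
  ∃ γ : Path a b, Function.Injective γ ∧ range γ = A

lemma contractibleSpace_unitInterval : ContractibleSpace unitInterval :=
  (convex_Icc (0 : ℝ) 1).contractibleSpace ⟨0, unitInterval.zero_mem⟩

namespace IsArc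

variable {A : Set X} {a b : X}

lemma isCompact (h : IsArc A a b) : IsCompact A := by
  obtain ⟨γ, -, rfl⟩ := h
  exact isCompact_range γ.continuous

lemma isPathConnected (h : IsArc A a b) : IsPathConnected A := by
  obtain ⟨γ, -, rfl⟩ := h
  have := contractibleSpace_unitInterval
  exact isPathConnected_range γ.continuous

lemma left_mem (h : IsArc A a b) : a ∈ A := by
  obtain ⟨γ, -, rfl⟩ := h
  exact ⟨0, γ.source⟩

lemma right_mem (h : IsArc A a b) : b ∈ A := by
  obtain ⟨γ, -, rfl⟩ := h
  exact ⟨1, γ.target⟩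

lemma left_ne_right (h : IsArc A a b) : a ≠ b := by
  obtain ⟨γ, hγ, -⟩ := h
  exact fun hab => zero_ne_one (hγ (γ.source.trans (hab.trans γ.target.symm)))

lemma image (h : IsArc A a b) (e : X ≃ₜ Y) : IsArc (e '' A) (e a) (e b) := by
  obtain ⟨γ, hγ, rfl⟩ := h
  exact ⟨γ.map e.continuous, e.injective.comp hγ, range_comp e γ⟩

lemma contractibleSpace [T2Space X] (h : IsArc A a b) : ContractibleSpace A := by
  obtain ⟨γ, hγ, rfl⟩ := h
  have := contractibleSpace_unitInterval
  exact (γ.continuous.isClosedEmbedding hγ).isEmbedding.toHomeomorph.symm.contractibleSpace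

lemma joinedIn_compl {A : Set ℂ} {a b p q : ℂ} (h : IsArc A a b) (hp : p ∉ A) (hq : q ∉ A) :
    JoinedIn Aᶜ p q := by
  have := h.contractibleSpace
  have hsub : ∀ {w}, w ∉ A → ∀ z ∈ A, z - w ≠ 0 := fun hw z hz =>
    sub_ne_zero.2 fun hzw => hw (hzw ▸ hz)
  exact (joinedIn_compl_iff_hasContinuousLogOn h.isCompact hp hq).2
    (.of_contractibleSpace (.div (by fun_prop) (by fun_prop) (hsub hp))
      fun z hz => div_ne_zero (hsub hq z hz) (hsub hp z hz))

end IsArc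

end Arc

section Fan

variable {X Y : Type*} [TopologicalSpace X] [TopologicalSpace Y]

lemma exists_mem_inter_closure_pathComponentIn [LocallyPathConnectedSpace X] {K A : Set X}
    (hK : IsClosed K) (hA : IsClosed A) {p d : X} (hdA : d ∉ A) (h : JoinedIn Kᶜ p d)
    (hsep : ¬JoinedIn (K ∪ A)ᶜ p d) :
    ∃ a ∈ A, a ∉ K ∧ a ∈ closure (pathComponentIn (K ∪ A)ᶜ d) := by
  by_contra! hcon
  have hopen : IsOpen (K ∪ A)ᶜ := (hK.union hA).isOpen_compl
  have hd : d ∈ (K ∪ A)ᶜ := not_or.2 ⟨h.target_mem, hdA⟩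
  have hclosed : closure (pathComponentIn (K ∪ A)ᶜ d) ∩ pathComponentIn Kᶜ d ⊆
      pathComponentIn (K ∪ A)ᶜ d := fun z ⟨hzcl, hz⟩ =>
    joinedIn_of_mem_closure hopen (isPreconnected_pathComponentIn _ d) pathComponentIn_subset
      (subset_closure (mem_pathComponentIn_self hd)) hd hzcl
      (not_or.2 ⟨hz.target_mem, fun hzA => hcon z hzA hz.target_mem hzcl⟩)
  exact hsep <| JoinedIn.symm <|
    (isPreconnected_pathComponentIn Kᶜ d).subset_of_closure_inter_subset
      (hopen.pathComponentIn d)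
      ⟨d, mem_pathComponentIn_self h.target_mem, mem_pathComponentIn_self hd⟩ hclosed h.symm

/-- A fan: arcs `A i` (the spokes), pairwise meeting only in their common end `u` (the hub), whose
other ends `r i` are their only points on a compact path-connected set `R` (the rim), together with
a connected set `U` (the face) disjoint from all of these and accumulating at every point of every
spoke. -/
structure IsFan {ι : Type*} (u : X) (A : ι → Set X) (r : ι → X) (R U : Set X) : Prop where
  isCompact_rim : IsCompact R
  isPathConnected_rim : IsPathConnected R
  isArc_spoke : ∀ i, IsArc (A i) u (r i)
  spoke_inter_rim : ∀ i, A i ∩ R = {r i}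
  spoke_inter_spoke : ∀ i j, i ≠ j → A i ∩ A j = {u}
  isPreconnected_face : IsPreconnected U
  disjoint_face_rim : Disjoint U R
  disjoint_face_spoke : ∀ i, Disjoint U (A i)
  spoke_subset_closure_face : ∀ i, A i ⊆ closure U

namespace IsFan

variable {ι : Type*}

lemma image {u : X} {A : ι → Set X} {r : ι → X} {R U : Set X} (h : IsFan u A r R U) (e : X ≃ₜ Y) :
    IsFan (e u) (fun i => e '' A i) (fun i => e (r i)) (e '' R) (e '' U) where
  isCompact_rim := h.isCompact_rim.image e.continuous
  isPathConnected_rim := h.isPathConnected_rim.image e.continuous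
  isArc_spoke i := (h.isArc_spoke i).image e
  spoke_inter_rim i := by rw [← image_inter e.injective, h.spoke_inter_rim, image_singleton]
  spoke_inter_spoke i j hij := by
    rw [← image_inter e.injective, h.spoke_inter_spoke i j hij, image_singleton]
  isPreconnected_face := h.isPreconnected_face.image e e.continuous.continuousOn
  disjoint_face_rim := (disjoint_image_iff e.injective).2 h.disjoint_face_rim
  disjoint_face_spoke i := (disjoint_image_iff e.injective).2 (h.disjoint_face_spoke i)
  spoke_subset_closure_face i := by
    rw [← e.image_closure]
    exact image_mono (h.spoke_subset_closure_face i)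

variable {A : ι → Set ℂ} {r : ι → ℂ} {R U : Set ℂ} {u p d : ℂ} {i j k : ι}

lemma joinedIn_compl_rim_union_spoke (h : IsFan u A r R U) (hp : p ∈ U) (hd : JoinedIn Rᶜ p d)
    (hdj : d ∉ A j) : JoinedIn (R ∪ A j)ᶜ p d := by
  refine joinedIn_compl_union h.isCompact_rim (h.isArc_spoke j).isCompact ?_ hd
    ((h.isArc_spoke j).joinedIn_compl (disjoint_left.1 (h.disjoint_face_spoke j) hp) hdj)
  rw [inter_comm, h.spoke_inter_rim]
  exact isPreconnected_singleton

/- The component of `d` reaches a point `a` of `A i`. It misses `A k`, since every point of `A k` is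
joined to `p` through `U`; so it joins `d` to `a`, and `U` joins `a` to `p`. -/
lemma joinedIn_compl_of_not_joinedIn (h : IsFan u A r R U) (hik : i ≠ k)
    (hp : p ∈ U) (hdR : JoinedIn Rᶜ p d) (hdi : d ∉ A i) (hdj : d ∉ A j)
    (hd : ¬JoinedIn (R ∪ A j ∪ A i)ᶜ p d) : JoinedIn (R ∪ A k ∪ A j)ᶜ p d := by
  have hUR {z} : z ∈ U → z ∉ R := fun hz => disjoint_left.1 h.disjoint_face_rim hz
  have hUA {z} (l : ι) : z ∈ U → z ∉ A l := fun hz => disjoint_left.1 (h.disjoint_face_spoke l) hz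
  have hclosed (l) : IsClosed (A l) := (h.isArc_spoke l).isCompact.isClosed
  have hopen (l m) : IsOpen (R ∪ A l ∪ A m)ᶜ :=
    ((h.isCompact_rim.isClosed.union (hclosed l)).union (hclosed m)).isOpen_compl
  have hUsub (l m) : U ⊆ (R ∪ A l ∪ A m)ᶜ := fun z hz =>
    not_or.2 ⟨not_or.2 ⟨hUR hz, hUA l hz⟩, hUA m hz⟩
  have hjoin {l m : ι} {z : ℂ} (hz : z ∈ closure U) (hz' : z ∉ R ∪ A l ∪ A m) :
      JoinedIn (R ∪ A l ∪ A m)ᶜ p z :=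
    joinedIn_of_mem_closure (hopen l m) h.isPreconnected_face (hUsub l m)
      (subset_closure hp) (hUsub l m hp) hz hz'
  obtain ⟨a, hai, haRj, hacl⟩ := exists_mem_inter_closure_pathComponentIn
    (h.isCompact_rim.isClosed.union (hclosed j)) (hclosed i) hdi
    (h.joinedIn_compl_rim_union_spoke hp hdR hdj) hd
  obtain ⟨haR, haj⟩ := not_or.1 haRj
  have hau : a ≠ u := fun hau => haj (hau ▸ (h.isArc_spoke j).left_mem)
  have hak : a ∉ A k := fun hak => hau ((h.spoke_inter_spoke i k hik).subset ⟨hai, hak⟩)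
  have ha : a ∉ R ∪ A k ∪ A j := not_or.2 ⟨not_or.2 ⟨haR, hak⟩, haj⟩
  have hsub : pathComponentIn (R ∪ A j ∪ A i)ᶜ d ⊆ (R ∪ A k ∪ A j)ᶜ := by
    rintro z hz ((hzR | hzk) | hzj)
    · exact hz.target_mem (Or.inl (Or.inl hzR))
    · exact hd ((hjoin (h.spoke_subset_closure_face k hzk) hz.target_mem).trans hz.symm)
    · exact hz.target_mem (Or.inl (Or.inr hzj))
  have hdmem : d ∈ pathComponentIn (R ∪ A j ∪ A i)ᶜ d :=
    mem_pathComponentIn_self (not_or.2 ⟨not_or.2 ⟨hdR.target_mem, hdj⟩, hdi⟩)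
  exact (hjoin (h.spoke_subset_closure_face i hai) ha).trans <|
    joinedIn_of_mem_closure (hopen k j) (isPreconnected_pathComponentIn _ d) hsub hacl ha
      (subset_closure hdmem) (hsub hdmem)

lemma exists_separated (h : IsFan u A r R U) (hij : i ≠ j) (hp : p ∈ U) :
    ∃ d, JoinedIn Rᶜ p d ∧ d ∉ A i ∧ d ∉ A j ∧ ¬JoinedIn (R ∪ A i ∪ A j)ᶜ p d := by
  have hri : r i ∈ A i ∩ R := (h.spoke_inter_rim i).superset rfl
  have hrj : r j ∈ A j ∩ R := (h.spoke_inter_rim j).superset rfl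
  have hrij : r i ≠ r j := fun hr => (h.isArc_spoke i).left_ne_right
    ((h.spoke_inter_spoke i j hij).subset ⟨hri.1, hr ▸ hrj.1⟩).symm
  have hspokes : ∀ z ∈ A i ∪ A j, z ≠ r i → z ≠ r j → JoinedIn Rᶜ p z := by
    intro z hz hzi hzj
    have hzU : z ∈ closure U :=
      hz.elim (fun hz => h.spoke_subset_closure_face i hz)
        fun hz => h.spoke_subset_closure_face j hz
    have hzR : z ∉ R := fun hzR =>
      hz.elim (fun hz => hzi ((h.spoke_inter_rim i).subset ⟨hz, hzR⟩))
        fun hz => hzj ((h.spoke_inter_rim j).subset ⟨hz, hzR⟩)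
    exact joinedIn_of_mem_closure h.isCompact_rim.isClosed.isOpen_compl h.isPreconnected_face
      h.disjoint_face_rim.subset_compl_right (subset_closure hp)
      (disjoint_left.1 h.disjoint_face_rim hp) hzU hzR
  obtain ⟨d, hdR, hdij, hd⟩ := exists_not_joinedIn_compl_union h.isCompact_rim
    h.isPathConnected_rim ((h.isArc_spoke i).isCompact.union (h.isArc_spoke j).isCompact)
    ((h.isArc_spoke i).isPathConnected.union (h.isArc_spoke j).isPathConnected
      ⟨u, (h.isArc_spoke i).left_mem, (h.isArc_spoke j).left_mem⟩)
    hrij ⟨hri.2, Or.inl hri.1⟩ ⟨hrj.2, Or.inr hrj.1⟩ hspokes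
  rw [← union_assoc] at hd
  obtain ⟨hdi, hdj⟩ := not_or.1 hdij
  exact ⟨d, hdR, hdi, hdj, hd⟩

lemma eq_or_eq_or_eq_of_complex (h : IsFan u A r R U) (i j k : ι) : i = j ∨ i = k ∨ j = k := by
  by_contra! ⟨hij, hik, hjk⟩
  obtain ⟨p, hp⟩ : U.Nonempty :=
    closure_nonempty_iff.1 ⟨u, h.spoke_subset_closure_face i (h.isArc_spoke i).left_mem⟩
  obtain ⟨d, hdR, hdi, hdj, hd⟩ := h.exists_separated hij hp
  have hkj : JoinedIn (R ∪ A k ∪ A j)ᶜ p d :=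
    h.joinedIn_compl_of_not_joinedIn hik hp hdR hdi hdj (by rwa [union_right_comm])
  have hki : JoinedIn (R ∪ A k ∪ A i)ᶜ p d :=
    h.joinedIn_compl_of_not_joinedIn hjk hp hdR hdj hdi hd
  have hcompact (l) : IsCompact (R ∪ A k ∪ A l) :=
    (h.isCompact_rim.union (h.isArc_spoke k).isCompact).union (h.isArc_spoke l).isCompact
  have hinter : (R ∪ A k ∪ A j) ∩ (R ∪ A k ∪ A i) = R ∪ A k := by
    rw [← union_inter_distrib_left, inter_comm, h.spoke_inter_spoke i j hij, union_eq_left,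
      singleton_subset_iff]
    exact Or.inr (h.isArc_spoke k).left_mem
  have hrk : r k ∈ A k ∩ R := (h.spoke_inter_rim k).superset rfl
  have hconn : IsPreconnected ((R ∪ A k ∪ A j) ∩ (R ∪ A k ∪ A i)) := by
    rw [hinter]
    exact (h.isPathConnected_rim.union (h.isArc_spoke k).isPathConnected
      ⟨r k, hrk.2, hrk.1⟩).isConnected.isPreconnected
  have hsub : R ∪ A i ∪ A j ⊆ (R ∪ A k ∪ A j) ∪ (R ∪ A k ∪ A i) := by
    rintro z ((hz | hz) | hz) <;> simp [hz]
  exact hd ((joinedIn_compl_union (hcompact j) (hcompact i) hconn hkj hki).mono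
    (compl_subset_compl.2 hsub))

theorem eq_or_eq_or_eq {A : ι → Set X} {r : ι → X} {R U : Set X} {u : X} (h : IsFan u A r R U)
    (e : X ≃ₜ ℂ) (i j k : ι) : i = j ∨ i = k ∨ j = k :=
  (h.image e).eq_or_eq_or_eq_of_complex i j k

end IsFan

end Fan

section Drawing

lemma isCompact_pathComponentIn_sUnion {X : Type*} [TopologicalSpace X] {𝒮 : Set (Set X)}
    (hfin : 𝒮.Finite) (hcompact : ∀ S ∈ 𝒮, IsCompact S) (hconn : ∀ S ∈ 𝒮, IsPathConnected S)
    (x : X) : IsCompact (pathComponentIn (⋃₀ 𝒮) x) := by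
  have heq : pathComponentIn (⋃₀ 𝒮) x = ⋃₀ {S ∈ 𝒮 | S ⊆ pathComponentIn (⋃₀ 𝒮) x} := by
    refine Subset.antisymm (fun z hz => ?_) (sUnion_subset fun S hS => hS.2)
    obtain ⟨S, hS, hzS⟩ := hz.target_mem
    exact ⟨S, ⟨hS, fun w hw =>
      hz.trans (((hconn S hS).joinedIn z hzS w hw).mono (subset_sUnion_of_mem hS))⟩, hzS⟩
  rw [heq]
  exact (hfin.subset (sep_subset _ _)).isCompact_sUnion fun S hS => hcompact S hS.1

namespace PlaneGraph

variable {V : Type u} {G : PlaneGraph V} {u v a b : V}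

lemma pos_mem_image (hv : v ∈ G.verts) : G.pos v ∈ G.image :=
  Or.inl (mem_image_of_mem _ hv)

lemma arc_subset_image (h : G.Adj u v) : G.arc s(u, v) ⊆ G.image :=
  fun _ hz => Or.inr (mem_iUnion_of_mem u (mem_iUnion_of_mem v (mem_iUnion_of_mem h hz)))

lemma image_deleteVerts_subset {s : Set V} : (G.deleteVerts s).image ⊆ G.image :=
  union_subset_union (image_mono sdiff_subset) <| iUnion_mono fun _ => iUnion_mono fun _ =>
    iUnion_subset fun h => subset_iUnion_of_subset h.1 subset_rfl

lemma isArc_arc (h : G.Adj u v) : IsArc (G.arc s(u, v)) (G.pos u) (G.pos v) := by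
  obtain ⟨f, hf, hinj, himage, h₀, h₁⟩ := G.arc_arc u v h
  refine ⟨⟨⟨fun t => f t, hf.comp_continuous continuous_subtype_val Subtype.property⟩,
    by simpa using h₀, by simpa using h₁⟩, hinj.injective, ?_⟩
  rw [← himage, image_eq_range]
  rfl

lemma joinedIn_image_of_reflTransGen (ha : a ∈ G.verts) (h : Relation.ReflTransGen G.Adj a b) :
    JoinedIn G.image (G.pos a) (G.pos b) := by
  induction h with
  | refl => exact JoinedIn.refl (pos_mem_image ha)
  | tail _ hbc ih =>
    have harc := isArc_arc hbc
    exact ih.trans ((harc.isPathConnected.joinedIn _ harc.left_mem _ harc.right_mem).mono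
      (arc_subset_image hbc))

lemma exists_finite_sUnion_eq_image (G : PlaneGraph V) : ∃ 𝒮 : Set (Set (ℝ × ℝ)), 𝒮.Finite ∧
    (∀ S ∈ 𝒮, IsCompact S) ∧ (∀ S ∈ 𝒮, IsPathConnected S) ∧ ⋃₀ 𝒮 = G.image := by
  let edges : Set (V × V) := {e | G.Adj e.1 e.2}
  have hedges : edges.Finite := (G.finite_verts.prod G.finite_verts).subset fun e he =>
    ⟨G.adj_mem _ _ he, G.adj_mem _ _ (G.adj_symm _ _ he)⟩
  refine ⟨(fun v => {G.pos v}) '' G.verts ∪ (fun e => G.arc s(e.1, e.2)) '' edges,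
    (G.finite_verts.image _).union (hedges.image _), ?_, ?_, ?_⟩
  · rintro _ (⟨v, -, rfl⟩ | ⟨e, he, rfl⟩)
    exacts [isCompact_singleton, (isArc_arc he).isCompact]
  · rintro _ (⟨v, -, rfl⟩ | ⟨e, he, rfl⟩)
    exacts [isPathConnected_singleton _, (isArc_arc he).isPathConnected]
  · rw [sUnion_union, sUnion_image, sUnion_image]
    ext z
    simp [image, edges, eq_comm (a := z)]

lemma isCompact_image (G : PlaneGraph V) : IsCompact G.image := by
  obtain ⟨𝒮, hfin, hcompact, -, heq⟩ := G.exists_finite_sUnion_eq_image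
  rw [← heq]
  exact hfin.isCompact_sUnion hcompact

lemma isCompact_pathComponentIn_image (G : PlaneGraph V) (p : ℝ × ℝ) :
    IsCompact (pathComponentIn G.image p) := by
  obtain ⟨𝒮, hfin, hcompact, hconn, heq⟩ := G.exists_finite_sUnion_eq_image
  rw [← heq]
  exact isCompact_pathComponentIn_sUnion hfin hcompact hconn p

lemma disjoint_outerFace_image (G : PlaneGraph V) : Disjoint G.outerFace G.image :=
  disjoint_left.2 fun _ hp => hp.1

lemma isPreconnected_outerFace (G : PlaneGraph V) : IsPreconnected G.outerFace := by
  refine isPreconnected_of_forall_pair fun p hp q hq => ?_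
  obtain ⟨W, hW, hWK, hpW, hqW⟩ := exists_isPreconnected_of_not_isBounded
    (by simp [one_add_one_eq_two]) G.isCompact_image.isBounded
    isPreconnected_connectedComponentIn (connectedComponentIn_subset _ _) hp.2
    isPreconnected_connectedComponentIn (connectedComponentIn_subset _ _) hq.2
  refine ⟨W, fun w hw => ⟨hWK hw, fun hb => hp.2 (hb.subset ?_)⟩,
    hpW (mem_connectedComponentIn hp.1), hqW (mem_connectedComponentIn hq.1), hW⟩
  exact hpW.trans (hW.subset_connectedComponentIn hw hWK)

lemma arc_inter_image_deleteVerts (h : G.Adj u a) :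
    G.arc s(u, a) ∩ (G.deleteVerts {u}).image = {G.pos a} := by
  have hau : a ≠ u := fun hau => G.adj_irrefl u (hau ▸ h)
  refine Subset.antisymm ?_ (singleton_subset_iff.2 ⟨(isArc_arc h).right_mem,
    pos_mem_image (G := G.deleteVerts {u}) ⟨G.adj_mem _ _ (G.adj_symm _ _ h), hau⟩⟩)
  rintro z ⟨hz, ⟨w, ⟨hw, hwu⟩, rfl⟩ | hz'⟩
  · exact congrArg G.pos ((G.arc_avoid u a h w hw hz).resolve_left hwu)
  · simp only [mem_iUnion] at hz'
    obtain ⟨v, w, ⟨hvw, hvu, hwu⟩, hz'⟩ := hz'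
    have hne : s(u, a) ≠ s(v, w) := fun heq =>
      (Sym2.mem_iff.1 (heq ▸ Sym2.mem_mk_left u a)).elim (fun huv => hvu huv.symm)
        fun huw => hwu huw.symm
    obtain ⟨t, ⟨rfl | rfl, ht⟩, rfl⟩ := G.arc_meet u a v w h hvw hne ⟨hz, hz'⟩
    · exact absurd ht (by rintro (rfl | rfl) <;> simp_all)
    · rfl

lemma arc_inter_arc (ha : G.Adj u a) (hb : G.Adj u b) (hab : a ≠ b) :
    G.arc s(u, a) ∩ G.arc s(u, b) = {G.pos u} := by
  refine Subset.antisymm (fun z hz => ?_)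
    (singleton_subset_iff.2 ⟨(isArc_arc ha).left_mem, (isArc_arc hb).left_mem⟩)
  have hne : s(u, a) ≠ s(u, b) := fun heq => hab (Sym2.congr_right.1 heq)
  obtain ⟨w, ⟨rfl | rfl, hw⟩, rfl⟩ := G.arc_meet u a u b ha hb hne hz
  · rfl
  · exact congrArg G.pos (hw.resolve_right hab)

/-- Adjacency in the boundary of the outer face. -/
def OuterAdj (G : PlaneGraph V) (u v : V) : Prop := G.Adj u v ∧ G.EdgeOnOuter u v

namespace OuterAdj

lemma symm (h : G.OuterAdj u v) : G.OuterAdj v u :=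
  ⟨G.adj_symm _ _ h.1, by rw [EdgeOnOuter, Sym2.eq_swap]; exact h.2⟩

lemma left_mem_boundaryVerts (h : G.OuterAdj u v) : u ∈ G.boundaryVerts :=
  ⟨G.adj_mem _ _ h.1, h.2 (isArc_arc h.1).left_mem⟩

lemma ne (h : G.OuterAdj u v) : u ≠ v := fun huv => G.adj_irrefl v (huv ▸ h.1)

end OuterAdj

lemma joinedIn_image_deleteVerts (hu : ¬BoundaryCutvertex G u) (ha : G.OuterAdj u a)
    (hb : G.OuterAdj u b) : JoinedIn (G.deleteVerts {u}).image (G.pos a) (G.pos b) := by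
  have hpath : Relation.ReflTransGen (fun x y => G.Adj x y ∧ G.EdgeOnOuter x y) a b :=
    (Relation.ReflTransGen.single ha.symm).tail hb
  have hreach : Relation.ReflTransGen
      (fun x y => G.Adj x y ∧ G.EdgeOnOuter x y ∧ x ≠ u ∧ y ≠ u) a b := by
    by_contra hreach
    exact hu ⟨a, b, ha.symm.left_mem_boundaryVerts, hb.symm.left_mem_boundaryVerts,
      ha.ne.symm, hb.ne.symm, hpath, hreach⟩
  exact joinedIn_image_of_reflTransGen (G := G.deleteVerts {u})
    ⟨ha.symm.left_mem_boundaryVerts.1, ha.ne.symm⟩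
    (Relation.ReflTransGen.mono (fun _ _ hxy => ⟨hxy.1, hxy.2.2⟩) a b hreach)

lemma isFan_arc_outerAdj (hu : ¬BoundaryCutvertex G u) (ha : G.OuterAdj u a) :
    IsFan (G.pos u) (fun w : {w // G.OuterAdj u w} => G.arc s(u, w)) (fun w => G.pos w)
      (pathComponentIn (G.deleteVerts {u}).image (G.pos a)) G.outerFace where
  isCompact_rim := isCompact_pathComponentIn_image _ _
  isPathConnected_rim :=
    isPathConnected_pathComponentIn (joinedIn_image_deleteVerts hu ha ha).source_mem
  isArc_spoke w := isArc_arc w.2.1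
  spoke_inter_rim w := by
    refine Subset.antisymm ?_ (singleton_subset_iff.2
      ⟨(isArc_arc w.2.1).right_mem, joinedIn_image_deleteVerts hu ha w.2⟩)
    exact (inter_subset_inter_right _ pathComponentIn_subset).trans
      (arc_inter_image_deleteVerts w.2.1).subset
  spoke_inter_spoke v w hvw := arc_inter_arc v.2.1 w.2.1 (Subtype.coe_ne_coe.2 hvw)
  isPreconnected_face := G.isPreconnected_outerFace
  disjoint_face_rim :=
    G.disjoint_outerFace_image.mono_right (pathComponentIn_subset.trans image_deleteVerts_subset)
  disjoint_face_spoke w := G.disjoint_outerFace_image.mono_right (arc_subset_image w.2.1)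
  spoke_subset_closure_face w := w.2.2.trans frontier_subset_closure

theorem eq_or_eq_or_eq_of_outerAdj {c : V} (hu : ¬BoundaryCutvertex G u) (ha : G.OuterAdj u a)
    (hb : G.OuterAdj u b) (hc : G.OuterAdj u c) : a = b ∨ a = c ∨ b = c := by
  simpa using (isFan_arc_outerAdj hu ha).eq_or_eq_or_eq
    Complex.equivRealProdCLM.symm.toHomeomorph ⟨a, ha⟩ ⟨b, hb⟩ ⟨c, hc⟩

end PlaneGraph

end Drawing

section Recoloring

variable {V α : Type*}

lemma exists_alternating_coloring {C : Set α} (hC : C.Nontrivial) (n : ℕ) (z : α) :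
    ∃ c : ℕ → α, (∀ i, c i ∈ C) ∧ (∀ i, c i ≠ c (i + 1)) ∧ c n ≠ z := by
  obtain ⟨s, hs, hsz⟩ := hC.exists_ne z
  obtain ⟨t, ht, hts⟩ := hC.exists_ne s
  refine ⟨fun i => if Even (i + n) then s else t, fun i => ?_, fun i => ?_, by simpa using hsz⟩
  · dsimp only
    split_ifs <;> assumption
  · by_cases h : Even (i + n) <;> simp [h, add_right_comm i 1 n, Nat.even_add_one, hts, hts.symm]

variable [DecidableEq V]

/-- The colouring that agrees with `φ` off the list `Q` and gives the `i`-th entry of `Q` the colour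
`c i`. -/
def recolorAlong (Q : List V) (c : ℕ → α) (φ : V → α) (v : V) : α :=
  if v ∈ Q then c (Q.idxOf v) else φ v

variable {Q : List V} {c : ℕ → α} {φ : V → α} {v : V}

lemma recolorAlong_getElem (hQ : Q.Nodup) {i : ℕ} (hi : i < Q.length) :
    recolorAlong Q c φ Q[i] = c i := by
  simp [recolorAlong, hQ.idxOf_getElem]

lemma recolorAlong_of_notMem (hv : v ∉ Q) : recolorAlong Q c φ v = φ v :=
  if_neg hv

lemma recolorAlong_ne {R : V → V → Prop} (hR : ∀ u v, R u v → R v u) (hQ : Q.Nodup)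
    (hpath : ∀ i j (hij : i ≤ j) (hj : j < Q.length), R Q[i] Q[j] → j = i + 1)
    (hc : ∀ i, c i ≠ c (i + 1)) (hφ : ∀ u v, u ∉ Q → v ∉ Q → R u v → φ u ≠ φ v)
    (hcφ : ∀ i (hi : i < Q.length) w, w ∉ Q → R Q[i] w → c i ≠ φ w) (u v : V) (huv : R u v) :
    recolorAlong Q c φ u ≠ recolorAlong Q c φ v := by
  have hpath' : ∀ i j (hi : i < Q.length) (hj : j < Q.length), i ≤ j → R Q[i] Q[j] → c i ≠ c j :=
    fun i j _ hj hij hRij => hpath i j hij hj hRij ▸ hc i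
  by_cases hu : u ∈ Q <;> by_cases hv : v ∈ Q
  · obtain ⟨i, hi, rfl⟩ := List.getElem_of_mem hu
    obtain ⟨j, hj, rfl⟩ := List.getElem_of_mem hv
    rw [recolorAlong_getElem hQ, recolorAlong_getElem hQ]
    obtain hij | hji := le_total i j
    · exact hpath' i j hi hj hij huv
    · exact (hpath' j i hj hi hji (hR _ _ huv)).symm
  · obtain ⟨i, hi, rfl⟩ := List.getElem_of_mem hu
    rw [recolorAlong_getElem hQ, recolorAlong_of_notMem hv]
    exact hcφ i hi v hv huv
  · obtain ⟨j, hj, rfl⟩ := List.getElem_of_mem hv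
    rw [recolorAlong_getElem hQ, recolorAlong_of_notMem hu]
    exact (hcφ j hj u hu (hR _ _ huv)).symm
  · rw [recolorAlong_of_notMem hu, recolorAlong_of_notMem hv]
    exact hφ u v hu hv huv

end Recoloring

section DemocraticReduction

variable {V : Type u} {G : PlaneGraph V} {L : V → Finset ℕ} {L0 : Finset ℕ} {Q : List V}
  {x y v w : V} {c i j : ℕ}

lemma reducedL_subset : reducedL G L L0 Q x y w ⊆ L w := by
  unfold reducedL
  split_ifs
  exacts [Finset.sdiff_subset, Finset.Subset.refl _]

lemma notMem_of_mem_reducedL (hc : c ∈ reducedL G L L0 Q x y w)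
    (hw : w = x ∨ w ≠ y ∧ ∃ p ∈ Q, G.Adj w p) : c ∉ L0 := by
  rw [reducedL, if_pos hw] at hc
  exact (Finset.mem_sdiff.1 hc).2

namespace PlaneGraph

lemma outerAdj_of_adj (hv : ¬∃ w ∈ G.boundaryVerts, G.Adj v w ∧ ¬G.EdgeOnOuter v w)
    (hw : w ∈ G.boundaryVerts) (h : G.Adj v w) : G.OuterAdj v w :=
  ⟨h, by_contra fun hvw => hv ⟨w, hw, h, hvw⟩⟩

lemma eq_getElem_of_outerAdj (hchain : Q.IsChain G.OuterAdj) (hnodup : Q.Nodup)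
    (hi : i + 2 < Q.length) (hcut : ¬BoundaryCutvertex G Q[i + 1]) (h : G.OuterAdj Q[i + 1] w) :
    w = Q[i] ∨ w = Q[i + 2] := by
  have hchain' := List.isChain_iff_getElem.1 hchain
  have hne : Q[i] ≠ Q[i + 2] := fun heq => by
    have := hnodup.getElem_inj_iff.1 heq
    omega
  have := eq_or_eq_or_eq_of_outerAdj hcut (hchain' i (by omega)).symm (hchain' (i + 1) hi) h
  grind

lemma eq_succ_of_adj_getElem (hchain : Q.IsChain G.OuterAdj)
    (hinduced : ∀ i j : Fin Q.length, (i : ℕ) + 1 < (j : ℕ) → ¬G.OuterAdj (Q.get i) (Q.get j))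
    (hchord : ∀ v ∈ Q, ¬∃ w ∈ G.boundaryVerts, G.Adj v w ∧ ¬G.EdgeOnOuter v w)
    (hij : i ≤ j) (hj : j < Q.length) (h : G.Adj Q[i] Q[j]) : j = i + 1 := by
  obtain rfl | hlt := hij.eq_or_lt
  · exact absurd h (G.adj_irrefl _)
  obtain ⟨k, rfl⟩ := Nat.exists_eq_add_one_of_ne_zero (Nat.ne_zero_of_lt hlt)
  have hbd : Q[k + 1] ∈ G.boundaryVerts :=
    (List.isChain_iff_getElem.1 hchain k hj).symm.left_mem_boundaryVerts
  by_contra hne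
  exact hinduced ⟨i, by omega⟩ ⟨k + 1, hj⟩ (by simp only; omega)
    (outerAdj_of_adj (hchord _ (List.getElem_mem _)) hbd h)

end PlaneGraph

open PlaneGraph

lemma notMem_or_eq_of_mem_reducedL (hchain : (x :: Q).IsChain G.OuterAdj)
    (hnodup : (x :: Q).Nodup)
    (hchord : ∀ v ∈ Q, ¬∃ w ∈ G.boundaryVerts, G.Adj v w ∧ ¬G.EdgeOnOuter v w)
    (hcut : ∀ v ∈ Q, ¬BoundaryCutvertex G v) (hy : y ∈ G.boundaryVerts) (hi : i < Q.length)
    (hw : w ∉ Q) (hadj : G.Adj Q[i] w) (hc : c ∈ reducedL G L L0 Q x y w) :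
    c ∉ L0 ∨ w = y ∧ i + 1 = Q.length := by
  have hQi : Q[i] ∈ Q := List.getElem_mem hi
  by_cases hwxy : w = x ∨ w ≠ y
  · exact Or.inl (notMem_of_mem_reducedL hc
      (hwxy.imp_right fun hwy => ⟨hwy, Q[i], hQi, G.adj_symm _ _ hadj⟩))
  obtain ⟨hwx, rfl⟩ : w ≠ x ∧ w = y := by simpa using hwxy
  refine Or.inr ⟨rfl, by_contra fun hlast => ?_⟩
  have hi' : i + 1 < Q.length := by omega
  obtain hprev | hnext := eq_getElem_of_outerAdj hchain hnodup (i := i)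
    (by simp only [List.length_cons]; omega) (hcut _ hQi) (outerAdj_of_adj (hchord _ hQi) hy hadj)
  · exact (List.mem_cons.1 (hprev ▸ List.getElem_mem _)).elim hwx hw
  · exact hw (hnext ▸ List.getElem_mem hi')

theorem democratic_reduction_extends_general (G : PlaneGraph V) (L : V → Finset ℕ)
    (L0 : Finset ℕ) (Q : List V) (x y : V) (hL0 : L0.Nontrivial) (hQne : Q ≠ [])
    (hQnodup : Q.Nodup) (hQchain : Q.IsChain G.OuterAdj)
    (hQinduced : ∀ i j : Fin Q.length, (i : ℕ) + 1 < (j : ℕ) → ¬G.OuterAdj (Q.get i) (Q.get j))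
    (hNoChord : ∀ v ∈ Q, ¬∃ w ∈ G.boundaryVerts, G.Adj v w ∧ ¬G.EdgeOnOuter v w)
    (hNoCut : ∀ v ∈ Q, ¬BoundaryCutvertex G v) (hQL0 : ∀ v ∈ Q, L0 ⊆ L v)
    (hx : G.OuterAdj x (Q.head hQne)) (hxQ : x ∉ Q) (hy : G.OuterAdj y (Q.getLast hQne))
    (φ : V → ℕ) (hφmem : ∀ v ∈ (G.deleteVerts {v | v ∈ Q}).verts, φ v ∈ reducedL G L L0 Q x y v)
    (hφproper : ∀ u v, (G.deleteVerts {v | v ∈ Q}).Adj u v → φ u ≠ φ v) :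
    ∃ ψ : V → ℕ, (∀ v ∈ G.verts, ψ v ∈ L v) ∧ (∀ u v, G.Adj u v → ψ u ≠ ψ v) ∧
      ∀ v ∈ (G.deleteVerts {v | v ∈ Q}).verts, ψ v = φ v := by
  classical
  have hchain : (x :: Q).IsChain G.OuterAdj :=
    List.isChain_cons.2 ⟨by simpa [List.head?_eq_some_head hQne] using hx, hQchain⟩
  obtain ⟨c, hcL0, hc, hcy⟩ := exists_alternating_coloring hL0 (Q.length - 1) (φ y)
  have hcφ : ∀ i (hi : i < Q.length) w, w ∉ Q → G.Adj Q[i] w → c i ≠ φ w := by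
    intro i hi w hw hadj heq
    obtain hφL0 | ⟨rfl, hlast⟩ := notMem_or_eq_of_mem_reducedL hchain (hQnodup.cons hxQ) hNoChord
      hNoCut hy.left_mem_boundaryVerts hi hw hadj
      (hφmem w ⟨G.adj_mem _ _ (G.adj_symm _ _ hadj), hw⟩)
    · exact hφL0 (heq ▸ hcL0 i)
    · exact hcy (by rwa [← hlast, Nat.add_sub_cancel])
  refine ⟨recolorAlong Q c φ, fun v hv => ?_, recolorAlong_ne G.adj_symm hQnodup
    (fun i j => eq_succ_of_adj_getElem hQchain hQinduced hNoChord) hc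
    (fun u v hu hv huv => hφproper u v ⟨huv, hu, hv⟩) hcφ,
    fun v hv => recolorAlong_of_notMem hv.2⟩
  by_cases hvQ : v ∈ Q
  · exact hQL0 v hvQ (by simpa [recolorAlong, hvQ] using hcL0 _)
  · rw [recolorAlong_of_notMem hvQ]
    exact reducedL_subset (hφmem v ⟨hv, hvQ⟩)

end DemocraticReduction


/-- Proposition 3.5(2): if `T(P, L0, x) = (G', S', L')` is a
democratic reduction of a canvas `T = (G, S, L)` and `φ` is an `L'`-coloring of
`G'`, then `φ` can be extended to an `L`-coloring of `G`. (The path `P` is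
given by the list `Q`.) -/
theorem democratic_reduction_extends {V : Type u} (G : PlaneGraph V)
    (Sverts : Set V) (SAdj : V → V → Prop) (L : V → Finset ℕ)
    (L0 : Finset ℕ) (Q : List V) (x y : V)
    (hT : IsCanvas G Sverts SAdj L)
    (hL0card : L0.card = 2)
    (hQne : Q ≠ [])
    (hQnodup : Q.Nodup)
    (hQverts : ∀ v ∈ Q, v ∈ G.verts)
    -- `Q` is a path in the boundary `C` of the outer face:
    (hQchain : List.Chain' (fun a b => G.Adj a b ∧ G.EdgeOnOuter a b) Q)
    (hQouter : ∀ v ∈ Q, G.OnOuter v)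
    -- `Q` is induced in `C`:
    (hQinduced : ∀ i j : Fin Q.length, (i : ℕ) + 1 < (j : ℕ) →
      ¬(G.Adj (Q.get i) (Q.get j) ∧ G.EdgeOnOuter (Q.get i) (Q.get j)))
    -- no vertex of `Q` is the end of a chord of `C`:
    (hNoChord : ∀ v ∈ Q, ¬∃ w ∈ G.boundaryVerts, G.Adj v w ∧ ¬G.EdgeOnOuter v w)
    -- no vertex of `Q` is a cutvertex of `C`:
    (hNoCut : ∀ v ∈ Q, ¬BoundaryCutvertex G v)
    (hVC : G.boundaryVerts ≠ {v | v ∈ Q})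
    (hQL0 : ∀ v ∈ Q, L0 ⊆ L v)
    -- `x` is the neighbor of the first vertex of `Q` on `C` outside `Q`,
    -- `y` is the neighbor of the last vertex of `Q` on `C` outside `Q`:
    (hx : G.Adj x (Q.head hQne) ∧ G.EdgeOnOuter x (Q.head hQne) ∧ x ∉ Q)
    (hy : G.Adj y (Q.getLast hQne) ∧ G.EdgeOnOuter y (Q.getLast hQne) ∧ y ∉ Q)
    (hxy : Q.length = 1 → x ≠ y)
    (hLx : (L x \ L0).Nonempty)
    (φ : V → ℕ)
    (hφmem : ∀ v ∈ (G.deleteVerts {v | v ∈ Q}).verts, φ v ∈ reducedL G L L0 Q x y v)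
    (hφproper : ∀ u v, (G.deleteVerts {v | v ∈ Q}).Adj u v → φ u ≠ φ v) :
    ∃ ψ : V → ℕ, (∀ v ∈ G.verts, ψ v ∈ L v) ∧ (∀ u v, G.Adj u v → ψ u ≠ ψ v) ∧
      ∀ v ∈ (G.deleteVerts {v | v ∈ Q}).verts, ψ v = φ v := by
  exact democratic_reduction_extends_general G L L0 Q x y
    (Finset.one_lt_card_iff_nontrivial.1 (by omega)) hQne hQnodup hQchain hQinduced hNoChord hNoCut
    hQL0 ⟨hx.1, hx.2.1⟩ hx.2.2 ⟨hy.1, hy.2.1⟩ φ hφmem hφproper
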